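/- If (λ, σ) is the pair (Dyck path, linear extension) arising from the sequence (p_1,…,p_n) with 0 ≤ p_i ≤ 2(i−1), then the descent set of σ equals the descent set of the min-word of match(p_1,…,p_n): DES(σ) = DES(min-word(match(p_1,…,p_n))). In particular, dis(DTR(p_1,…,p_n)) = des(min-word(match(p_1,…,p_n))). -/

import Mathlib

open Finset

noncomputable section

/-- A Dyck path of order `n`: a word of `2n` steps (`true` = up-step `(+1,+1)`,
`false` = down-step `(+1,-1)`) from `(-n,0)` to `(n,0)` staying weakly above the x-axis. -/
structure DyckPath (n : ℕ) where
  step : Fin (2 * n) → Bool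
  balanced : (Finset.univ.filter fun i => step i = true).card = n
  nonneg : ∀ k : ℕ, k ≤ 2 * n →
    (Finset.univ.filter fun i : Fin (2 * n) => (i : ℕ) < k ∧ step i = false).card ≤
      (Finset.univ.filter fun i : Fin (2 * n) => (i : ℕ) < k ∧ step i = true).card

namespace DyckPath

/-- Height of the path above column `x` (columns run from `-n` to `n`). -/
def ht {n : ℕ} (P : DyckPath n) (x : ℤ) : ℤ :=
  ((Finset.univ.filter fun i : Fin (2 * n) => ((i : ℕ) : ℤ) < x + n ∧ P.step i = true).card : ℤ) -
    ((Finset.univ.filter fun i : Fin (2 * n) => ((i : ℕ) : ℤ) < x + n ∧ P.step i = false).card : ℤ)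

/-- Height of the path at lattice point number `k`, `0 ≤ k ≤ 2n`
(point `k` lies at column `k - n`). -/
def pt {n : ℕ} (P : DyckPath n) (k : ℕ) : ℤ := P.ht ((k : ℤ) - n)

end DyckPath

/-- `IsChord P p q`: the up-step at (0-indexed) position `p` matches the down-step at
position `q`, forming a chord of `P`. -/
def IsChord {n : ℕ} (P : DyckPath n) (p q : ℕ) : Prop :=
  p < q ∧ q < 2 * n ∧
    (∃ hp : p < 2 * n, P.step ⟨p, hp⟩ = true) ∧
    (∃ hq : q < 2 * n, P.step ⟨q, hq⟩ = false) ∧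
    P.pt (q + 1) = P.pt p ∧
    ∀ m : ℕ, p < m → m ≤ q → P.pt p < P.pt m

/-- A natural labeling of the chord poset of `P`: the chord labeled `i` has its up-step at
(0-indexed) position `l i` and matching down-step at position `r i`; distinct labels name
distinct chords; and if one chord is nested inside another it receives a larger label. -/
structure ChordLabeling {n : ℕ} (P : DyckPath n) where
  l : Fin n → ℕ
  r : Fin n → ℕ
  chord : ∀ i, IsChord P (l i) (r i)
  inj : Function.Injective l
  natural : ∀ i j : Fin n, l j < l i → r i < r j → j < i

/-- The length of the chord labeled `i`: the number of up steps of `P` between and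
including its two endpoints. -/
def chordLen {n : ℕ} {P : DyckPath n} (C : ChordLabeling P) (i : Fin n) : ℕ :=
  (Finset.univ.filter fun m : Fin (2 * n) =>
    C.l i ≤ (m : ℕ) ∧ (m : ℕ) ≤ C.r i ∧ P.step m = true).card

/-- The growth sequence `p_1, …, p_n` associated with a natural chord labeling:
`p i = #{j<i : l j < l i} + #{j<i : r j < l i}`. -/
def seqOf {n : ℕ} {P : DyckPath n} (C : ChordLabeling P) (i : Fin n) : ℕ :=
  (Finset.univ.filter fun j : Fin n => j < i ∧ C.l j < C.l i).card +
    (Finset.univ.filter fun j : Fin n => j < i ∧ C.r j < C.l i).card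

/-- `σ` is the standardization of the word `w` (with distinct letters). -/
def IsStandardization {n : ℕ} (w : Fin n → ℕ) (σ : Equiv.Perm (Fin n)) : Prop :=
  ∀ i j : Fin n, σ i < σ j ↔ w i < w j

/-- `σ ∈ 𝓛(P_λ)`: σ is `L₀ ∘ L⁻¹` for some natural labeling `L` of the chord poset,
equivalently the standardization of the word of left endpoints of a natural labeling. -/
def LinExt {n : ℕ} (P : DyckPath n) (σ : Equiv.Perm (Fin n)) : Prop :=
  ∃ C : ChordLabeling P, IsStandardization C.l σ

/-- Successor index in `Fin n` (used only under the guard `i+1 < n`). -/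
def nextIdx {n : ℕ} (i : Fin n) : Fin n := ⟨((i : ℕ) + 1) % n, Nat.mod_lt _ i.pos⟩

/-- Descent set of a word: positions `i` with `i+1 < n` and `w i > w (i+1)`. -/
def descentFinset {n : ℕ} (w : Fin n → ℕ) : Finset (Fin n) :=
  Finset.univ.filter fun i => (i : ℕ) + 1 < n ∧ w (nextIdx i) < w i

/-- Number of inversions of a word. -/
def wordInv {n : ℕ} (w : Fin n → ℕ) : ℕ :=
  (Finset.univ.filter fun p : Fin n × Fin n => p.1 < p.2 ∧ w p.2 < w p.1).card

/-- The word of values of a permutation. -/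
def permWord {n : ℕ} (σ : Equiv.Perm (Fin n)) : Fin n → ℕ := fun i => (σ i : ℕ)

/-- inv(σ). -/
def permInv {n : ℕ} (σ : Equiv.Perm (Fin n)) : ℕ := wordInv (permWord σ)

/-- des(σ). -/
def permDes {n : ℕ} (σ : Equiv.Perm (Fin n)) : ℕ := (descentFinset (permWord σ)).card

/-- `REM_i(w) = {k > i : w i > w k > w (i+1)}`, the right embraced numbers. -/
def remSet {n : ℕ} (w : Fin n → ℕ) (i : Fin n) : Finset (Fin n) :=
  Finset.univ.filter fun k => i < k ∧ w (nextIdx i) < w k ∧ w k < w i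

/-- desdif(σ) = Σ_{i ∈ DES σ} (σ i − σ (i+1)). -/
def desdif {n : ℕ} (σ : Equiv.Perm (Fin n)) : ℕ :=
  ∑ i ∈ descentFinset (permWord σ), (permWord σ i - permWord σ (nextIdx i))

/-- res(σ) = Σ_{i ∈ DES σ} #{k < i : σ i > σ k > σ (i+1)}. -/
def resStat {n : ℕ} (σ : Equiv.Perm (Fin n)) : ℕ :=
  ∑ i ∈ descentFinset (permWord σ),
    (Finset.univ.filter fun k : Fin n =>
      k < i ∧ permWord σ (nextIdx i) < permWord σ k ∧ permWord σ k < permWord σ i).card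

/-- The Mahonian statistic mad(σ) = desdif(σ) + res(σ). -/
def mad {n : ℕ} (σ : Equiv.Perm (Fin n)) : ℕ := desdif σ + resStat σ

/-- σ avoids the pattern 231. -/
def Avoids231 {n : ℕ} (σ : Equiv.Perm (Fin n)) : Prop :=
  ¬∃ i j k : Fin n, i < j ∧ j < k ∧ σ k < σ i ∧ σ i < σ j

/-- The boxes of the skew shape `lam/mu` (with `mu` weakly above `lam`), each box
recorded by its bottom corner (a lattice point `(x, z)` with `z ≡ x + n (mod 2)`). -/
def skewCells {n : ℕ} (lam mu : DyckPath n) : Finset (ℤ × ℤ) :=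
  ((Finset.Icc (-(n : ℤ)) n) ×ˢ (Finset.Icc (0 : ℤ) n)).filter fun c =>
    lam.ht c.1 ≤ c.2 ∧ c.2 + 2 ≤ mu.ht c.1 ∧ (c.2 - c.1 - n) % 2 = 0

/-- A Dyck tile, recorded by the set of bottom corners of its boxes: these form
a Dyck-path shape, i.e. a ±1-step lattice path whose two ends are lowest. -/
def IsDyckTile (t : Finset (ℤ × ℤ)) : Prop :=
  ∃ (a b : ℤ) (f : ℤ → ℤ), a ≤ b ∧
    (∀ x : ℤ, a ≤ x → x < b → f (x + 1) = f x + 1 ∨ f (x + 1) = f x - 1) ∧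
    f b = f a ∧ (∀ x : ℤ, a ≤ x → x ≤ b → f a ≤ f x) ∧
    t = (Finset.Icc a b).image fun x => (x, f x)

/-- A Dyck tiling of order `n`: a tiling of the skew shape between two Dyck paths of
order `n` by Dyck tiles. -/
structure DyckTiling (n : ℕ) where
  lower : DyckPath n
  upper : DyckPath n
  below : ∀ x : ℤ, lower.ht x ≤ upper.ht x
  tiles : Finset (Finset (ℤ × ℤ))
  isDyck : ∀ t ∈ tiles, IsDyckTile t
  disj : ∀ t ∈ tiles, ∀ u ∈ tiles, t ≠ u → Disjoint t u
  cover : tiles.biUnion id = skewCells lower upper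

namespace DyckTiling

/-- Number of boxes of the skew shape. -/
def area {n : ℕ} (T : DyckTiling n) : ℕ := (skewCells T.lower T.upper).card

/-- Number of tiles. -/
def numTiles {n : ℕ} (T : DyckTiling n) : ℕ := T.tiles.card

/-- art(T) = (area(T) + tiles(T)) / 2. -/
def art {n : ℕ} (T : DyckTiling n) : ℕ := (T.area + T.numTiles) / 2

/-- dis(T): the number of step positions where the lower path steps down while the
upper path steps up. -/
def dis {n : ℕ} (T : DyckTiling n) : ℕ :=
  (Finset.univ.filter fun i : Fin (2 * n) =>
    T.lower.step i = false ∧ T.upper.step i = true).card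

/-- Cover-inclusiveness: whenever a tile has a box strictly above a box of another tile,
its horizontal extent is contained in that of the other tile. -/
def CoverInclusive {n : ℕ} (T : DyckTiling n) : Prop :=
  ∀ t ∈ T.tiles, ∀ u ∈ T.tiles,
    (∃ p ∈ t, ∃ q ∈ u, (p : ℤ × ℤ).1 = (q : ℤ × ℤ).1 ∧ (q : ℤ × ℤ).2 < (p : ℤ × ℤ).2) →
    ∀ p ∈ t, ∃ y : ℤ, ((p : ℤ × ℤ).1, y) ∈ u

end DyckTiling

/-- Height function of the spread at column `s` of a Dyck path. -/
def spreadHt {n : ℕ} (P : DyckPath n) (s x : ℤ) : ℤ :=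
  if x < s then P.ht (x + 1) else if x = s then P.ht s + 1 else P.ht (x - 1)

/-- Spread of a tile at column `s`: points left of `s` move left, points right of `s`
move right, and a point at column `s` is duplicated upward. -/
def spreadTile (s : ℤ) (t : Finset (ℤ × ℤ)) : Finset (ℤ × ℤ) :=
  ((t.filter fun p => p.1 ≤ s).image fun p => (p.1 - 1, p.2)) ∪
    ((t.filter fun p => p.1 = s).image fun p => (p.1, p.2 + 1)) ∪
    ((t.filter fun p => s ≤ p.1).image fun p => (p.1 + 1, p.2))

/-- Spread of a set of tiles at column `s`. -/
def spreadTiles (s : ℤ) (ts : Finset (Finset (ℤ × ℤ))) : Finset (Finset (ℤ × ℤ)) :=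
  ts.image (spreadTile s)

/-- Column `c` is eligible for a tiling with upper-boundary height function `h` and
tile set `ts`: the upper boundary has an up step ending at column `c`, and its point at
column `c` is not the top corner of a one-box tile. -/
def EligibleCol (h : ℤ → ℤ) (ts : Finset (Finset (ℤ × ℤ))) (c : ℤ) : Prop :=
  h c = h (c - 1) + 1 ∧ ({(c, h c - 2)} : Finset (ℤ × ℤ)) ∉ ts

/-- `T'` is the result of the strip-grow map applied to `(T, s)`: spread `T` at `s` and
add a one-box tile on each up step of the (spread) upper boundary starting at a column
`≥ s` (i.e. strictly to the right of column `s`). -/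
def StripGrowRel {n : ℕ} (T : DyckTiling n) (s : ℤ) (T' : DyckTiling (n + 1)) : Prop :=
  (∀ x : ℤ, T'.lower.ht x = spreadHt T.lower s x) ∧
  (∀ x : ℤ, T'.upper.ht x =
    if s ≤ x ∧ spreadHt T.upper s (x + 1) = spreadHt T.upper s x + 1 then
      spreadHt T.upper s x + 2
    else spreadHt T.upper s x) ∧
  T'.tiles = spreadTiles s T.tiles ∪
    ((Finset.Icc s (n : ℤ)).filter fun x =>
        spreadHt T.upper s (x + 1) = spreadHt T.upper s x + 1).image
      (fun x => ({(x, spreadHt T.upper s x)} : Finset (ℤ × ℤ)))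

/-- `T'` is the result of the ribbon-grow map applied to `(T, s)`: spread `T` at `s`,
and if the special column `Q` of the spread tiling is strictly right of `s`, add a
ribbon of one-box tiles at all columns strictly between `s` and `Q`. -/
def RibbonGrowRel {n : ℕ} (T : DyckTiling n) (s : ℤ) (T' : DyckTiling (n + 1)) : Prop :=
  (∀ x : ℤ, T'.lower.ht x = spreadHt T.lower s x) ∧
  ∃ Q : ℤ,
    EligibleCol (spreadHt T.upper s) (spreadTiles s T.tiles) Q ∧
    (∀ c : ℤ, EligibleCol (spreadHt T.upper s) (spreadTiles s T.tiles) c → c ≤ Q) ∧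
    (∀ x : ℤ, T'.upper.ht x =
      if s < x ∧ x < Q then spreadHt T.upper s x + 2 else spreadHt T.upper s x) ∧
    T'.tiles = spreadTiles s T.tiles ∪
      (Finset.Ioo s Q).image (fun x => ({(x, spreadHt T.upper s x)} : Finset (ℤ × ℤ)))

/-- `s` is the special column of `T`: its rightmost eligible column. -/
def SpecialCol {n : ℕ} (T : DyckTiling n) (s : ℤ) : Prop :=
  EligibleCol T.upper.ht T.tiles s ∧ ∀ c : ℤ, EligibleCol T.upper.ht T.tiles c → c ≤ s

/-- In the strip-shrink map applied to `T'` with special column `s`, a one-box tile is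
removed at column `x`: `x` is right of `s` and there is a one-box tile there that is
part of an up step of the upper boundary. -/
def StripRemovedAt {n : ℕ} (T' : DyckTiling n) (s x : ℤ) : Prop :=
  s < x ∧ T'.upper.ht x = T'.upper.ht (x - 1) + 1 ∧
    ({(x, T'.upper.ht x - 2)} : Finset (ℤ × ℤ)) ∈ T'.tiles

instance {n : ℕ} (T' : DyckTiling n) (s x : ℤ) : Decidable (StripRemovedAt T' s x) := by
  unfold StripRemovedAt; infer_instance

/-- `(T, s)` is the result of the strip-shrink map applied to `T'`: `s` is the special
column of `T'`; all one-box tiles right of `s` lying on up steps of the upper boundary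
are removed; and the result is the spread of `T` at `s`. -/
def StripShrinkRel {n : ℕ} (T' : DyckTiling (n + 1)) (T : DyckTiling n) (s : ℤ) : Prop :=
  SpecialCol T' s ∧
  (∀ x : ℤ, spreadHt T.lower s x = T'.lower.ht x) ∧
  (∀ x : ℤ, spreadHt T.upper s x =
    if StripRemovedAt T' s x then T'.upper.ht x - 2 else T'.upper.ht x) ∧
  spreadTiles s T.tiles =
    T'.tiles \ (((Finset.Ioc s ((n : ℤ) + 1)).filter fun x => StripRemovedAt T' s x).image
      fun x => ({(x, T'.upper.ht x - 2)} : Finset (ℤ × ℤ)))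

/-- `(T, s)` is the result of the ribbon-shrink map applied to `T'`: `s` is the special
column of `T'`; the maximal run of topmost one-box tiles in columns `s+1, s+2, …` is
removed; and the result is the spread of `T` at `s`. -/
def RibbonShrinkRel {n : ℕ} (T' : DyckTiling (n + 1)) (T : DyckTiling n) (s : ℤ) : Prop :=
  SpecialCol T' s ∧
  ∃ r : ℤ, s < r ∧
    (∀ x : ℤ, s < x → x < r → ({(x, T'.upper.ht x - 2)} : Finset (ℤ × ℤ)) ∈ T'.tiles) ∧
    ({(r, T'.upper.ht r - 2)} : Finset (ℤ × ℤ)) ∉ T'.tiles ∧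
    (∀ x : ℤ, spreadHt T.lower s x = T'.lower.ht x) ∧
    (∀ x : ℤ, spreadHt T.upper s x =
      if s < x ∧ x < r then T'.upper.ht x - 2 else T'.upper.ht x) ∧
    spreadTiles s T.tiles =
      T'.tiles \ ((Finset.Ioo s r).image fun x => ({(x, T'.upper.ht x - 2)} : Finset (ℤ × ℤ)))

/-- `IsDTS n p T`: `T` is the Dyck tiling `DTS(p_1, …, p_n)` (indices 0-based, so the
growth column for step `i` is `p i - i`). -/
inductive IsDTS : (n : ℕ) → (Fin n → ℕ) → DyckTiling n → Prop where
  | nil (p : Fin 0 → ℕ) (T : DyckTiling 0) : IsDTS 0 p T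
  | cons (n : ℕ) (p : Fin (n + 1) → ℕ) (T : DyckTiling n) (T' : DyckTiling (n + 1)) :
      IsDTS n (fun i => p i.castSucc) T →
      StripGrowRel T ((p (Fin.last n) : ℤ) - n) T' → IsDTS (n + 1) p T'

/-- `IsDTR n p T`: `T` is the Dyck tiling `DTR(p_1, …, p_n)`. -/
inductive IsDTR : (n : ℕ) → (Fin n → ℕ) → DyckTiling n → Prop where
  | nil (p : Fin 0 → ℕ) (T : DyckTiling 0) : IsDTR 0 p T
  | cons (n : ℕ) (p : Fin (n + 1) → ℕ) (T : DyckTiling n) (T' : DyckTiling (n + 1)) :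
      IsDTR n (fun i => p i.castSucc) T →
      RibbonGrowRel T ((p (Fin.last n) : ℤ) - n) T' → IsDTR (n + 1) p T'

/-- `T = DTS(λ, σ)`. -/
def IsDTSof {n : ℕ} (lam : DyckPath n) (σ : Equiv.Perm (Fin n)) (T : DyckTiling n) : Prop :=
  ∃ C : ChordLabeling lam, IsStandardization C.l σ ∧ IsDTS n (seqOf C) T

/-- `T = DTR(λ, σ)`. -/
def IsDTRof {n : ℕ} (lam : DyckPath n) (σ : Equiv.Perm (Fin n)) (T : DyckTiling n) : Prop :=
  ∃ C : ChordLabeling lam, IsStandardization C.l σ ∧ IsDTR n (seqOf C) T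

/-- Increment `a` if it exceeds `p`. -/
def bump (p a : ℕ) : ℕ := if p < a then a + 1 else a

/-- The perfect matching `match(p_1, …, p_n)` of `{1, …, 2n}`. -/
def matchSeq : (n : ℕ) → (Fin n → ℕ) → Finset (ℕ × ℕ)
  | 0, _ => ∅
  | n + 1, p =>
    ((matchSeq n fun i => p i.castSucc).image fun q =>
      (bump (p (Fin.last n)) q.1, bump (p (Fin.last n)) q.2)) ∪
      {(p (Fin.last n) + 1, 2 * (n + 1))}

/-- The number of nestings of a matching: pairs `(a,b)`, `(c,d)` with `c < a < b < d`. -/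
def nestings (M : Finset (ℕ × ℕ)) : ℕ :=
  ((M ×ˢ M).filter fun q => q.2.1 < q.1.1 ∧ q.1.1 < q.1.2 ∧ q.1.2 < q.2.2).card

/-- `w` is the min-word of `M`: the list of the smaller elements of the pairs of `M`,
sorted by the larger elements. -/
def IsMinWord (n : ℕ) (M : Finset (ℕ × ℕ)) (w : Fin n → ℕ) : Prop :=
  ∃ b : Fin n → ℕ, StrictMono b ∧ (∀ i, w i < b i) ∧
    M = Finset.univ.image fun i => (w i, b i)

/-- The number of tiles of `T` containing boxes over both endpoint columns of the
chord with endpoints at step positions `p < q`. -/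
def chordTileCount {n : ℕ} (T : DyckTiling n) (p q : ℕ) : ℕ :=
  (T.tiles.filter fun t =>
    (∃ c ∈ t, (c : ℤ × ℤ).1 = (p : ℤ) + 1 - n) ∧ (∃ c ∈ t, (c : ℤ × ℤ).1 = (q : ℤ) - n)).card

/-- A Dyck tableau of order `n` over the zigzag path `Z` of order `n+1`: a skew shape
`Z/μ` with `n` dots, one in each column of the skew shape through a valley of `Z`. -/
structure DyckTableau (n : ℕ) (Z : DyckPath (n + 1)) where
  upper : DyckPath (n + 1)
  below : ∀ x : ℤ, Z.ht x ≤ upper.ht x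
  dots : Finset (ℤ × ℤ)
  sub : dots ⊆ skewCells Z upper
  card_dots : dots.card = n
  valley : ∀ x : ℤ, Z.ht (x - 1) = Z.ht x + 1 → Z.ht (x + 1) = Z.ht x + 1 →
    (dots.filter fun c => c.1 = x).card = 1

/-- The `q`-integer `[m]_q = 1 + q + ⋯ + q^(m-1)` as a polynomial. -/
def qint (m : ℕ) : Polynomial ℤ := ∑ i ∈ Finset.range m, Polynomial.X ^ i

/-- The `q`-factorial `[n]_q!`. -/
def qfact (n : ℕ) : Polynomial ℤ := ∏ i ∈ Finset.range n, qint (i + 1)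


lemma nextIdx_eq {n : ℕ} (i : Fin n) (h : (i : ℕ) + 1 < n) : nextIdx i = ⟨i + 1, h⟩ := by
  simp [nextIdx, Nat.mod_eq_of_lt h]

/-- A left endpoint drops from one label to the next exactly when the growth sequence does not
increase. -/
lemma seqOf_succ_le_iff {n : ℕ} {P : DyckPath n} (C : ChordLabeling P) {i j : Fin n}
    (hij : (j : ℕ) = i + 1) : seqOf C j ≤ seqOf C i ↔ C.l j < C.l i := by
  have hlr := (C.chord i).1
  constructor
  · intro h
    by_contra hlt
    have hne : C.l i ≠ C.l j := fun e => by
      have := C.inj e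
      omega
    have h₁ : (univ.filter fun k : Fin n => k < i ∧ C.l k < C.l i).card <
        (univ.filter fun k : Fin n => k < j ∧ C.l k < C.l j).card := by
      apply card_lt_card
      rw [ssubset_iff_of_subset (fun k => by simp only [mem_filter_univ]; omega)]
      exact ⟨i, by simp only [mem_filter_univ]; omega, by simp⟩
    have h₂ : (univ.filter fun k : Fin n => k < i ∧ C.r k < C.l i).card ≤
        (univ.filter fun k : Fin n => k < j ∧ C.r k < C.l j).card :=
      card_le_card fun k => by simp only [mem_filter_univ]; omega
    unfold seqOf at h
    omega
  · intro h
    unfold seqOf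
    apply Nat.add_le_add <;> refine card_le_card fun k => ?_ <;>
      simp only [mem_filter_univ] <;> rintro ⟨hk, hl⟩ <;>
      rcases eq_or_ne k i with rfl | hki <;> omega

lemma seqOf_le {n : ℕ} {P : DyckPath n} (C : ChordLabeling P) (i : Fin n) :
    seqOf C i ≤ 2 * i := by
  have h (q : Fin n → Prop) [DecidablePred q] :
      (univ.filter fun j : Fin n => j < i ∧ q j).card ≤ i := by
    calc _ ≤ (Iio i).card := card_le_card fun j => by simp +contextual
      _ = i := by simp
  have h₁ := h fun j => C.l j < C.l i
  have h₂ := h fun j => C.r j < C.l i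
  unfold seqOf
  omega

lemma bump_lt_bump_iff {p a b : ℕ} : bump p a < bump p b ↔ a < b := by
  unfold bump
  split_ifs <;> omega

/-- The min-word of `matchSeq n p` descends exactly where `p` does not increase. -/
lemma exists_minWord (n : ℕ) (p : Fin n → ℕ) (hp : ∀ i, p i ≤ 2 * i) :
    ∃ w b : Fin n → ℕ, StrictMono b ∧ (∀ i, b i ≤ 2 * n) ∧
      matchSeq n p = univ.image (fun i => (w i, b i)) ∧
      (∀ i : Fin n, (i : ℕ) + 1 = n → w i = p i + 1) ∧
      ∀ i j : Fin n, (j : ℕ) = i + 1 → (w j < w i ↔ p j ≤ p i) := by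
  induction n with
  | zero => exact ⟨p, p, fun i => i.elim0, fun i => i.elim0, by simp [matchSeq],
      fun i => i.elim0, fun i => i.elim0⟩
  | succ n ih =>
    obtain ⟨w, b, hb, hbn, hM, hlast, hdes⟩ :=
      ih (fun i => p i.castSucc) (fun i => by simpa using hp i.castSucc)
    set q := p (Fin.last n) with hq
    refine ⟨Fin.snoc (fun i => bump q (w i)) (q + 1),
      Fin.snoc (fun i => bump q (b i)) (2 * (n + 1)), ?_, ?_, ?_, ?_, ?_⟩
    · intro i j hij
      induction j using Fin.lastCases with
      | last =>
        induction i using Fin.lastCases with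
        | last => simp at hij
        | cast i =>
          have := hbn i
          simp only [Fin.snoc_castSucc, Fin.snoc_last, bump]
          split_ifs <;> omega
      | cast j =>
        induction i using Fin.lastCases with
        | last => exact absurd hij (Fin.castSucc_lt_last j).le.not_gt
        | cast i =>
          simp only [Fin.snoc_castSucc, bump_lt_bump_iff]
          exact hb (by simpa using hij)
    · intro i
      induction i using Fin.lastCases with
      | last => simp
      | cast i =>
        have := hbn i
        simp only [Fin.snoc_castSucc, bump]
        split_ifs <;> omega
    · ext x
      simp only [matchSeq, hM, mem_union, mem_image, mem_univ, true_and, mem_singleton,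
        exists_exists_eq_and, ← hq]
      constructor
      · rintro (⟨a, rfl⟩ | rfl)
        · exact ⟨a.castSucc, by simp⟩
        · exact ⟨Fin.last n, by simp⟩
      · rintro ⟨a, rfl⟩
        induction a using Fin.lastCases with
        | last => exact Or.inr (by simp)
        | cast a => exact Or.inl ⟨a, by simp⟩
    · intro i hi
      obtain rfl : i = Fin.last n := Fin.ext (by simpa using hi)
      simp [hq]
    · intro i j hij
      induction i using Fin.lastCases with
      | last => simp at hij; omega
      | cast i =>
        induction j using Fin.lastCases with
        | last =>
          have := hlast i (by simpa using hij.symm)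
          simp only [Fin.snoc_castSucc, Fin.snoc_last, this, ← hq, bump]
          split_ifs <;> omega
        | cast j =>
          simp only [Fin.snoc_castSucc, bump_lt_bump_iff]
          exact hdes i j (by simpa using hij)

lemma IsMinWord.lt_iff {n : ℕ} {p w : Fin n → ℕ} (hp : ∀ i, p i ≤ 2 * i)
    (hw : IsMinWord n (matchSeq n p) w) {i j : Fin n} (hij : (j : ℕ) = i + 1) :
    w j < w i ↔ p j ≤ p i := by
  obtain ⟨w₀, b₀, hb₀, -, hM₀, -, hdes⟩ := exists_minWord n p hp
  obtain ⟨b, hb, -, hM⟩ := hw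
  have hMM := hM.symm.trans hM₀
  have hbb : b = b₀ := by
    rw [← hb.range_inj hb₀]
    have := congrArg (fun M => ((M.image Prod.snd : Finset ℕ) : Set ℕ)) hMM
    simpa [image_image, Function.comp_def] using this
  have hww : w = w₀ := by
    funext k
    have : (w k, b k) ∈ univ.image fun i => (w₀ i, b₀ i) := by
      rw [← hMM]
      exact mem_image_of_mem _ (mem_univ k)
    obtain ⟨m, -, hm⟩ := mem_image.1 this
    rw [hbb, Prod.mk.injEq] at hm
    rw [← hm.1, hb₀.injective hm.2]
  rw [hww]
  exact hdes i j hij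

namespace DyckPath

/-- A step of a Dyck path changes the height by one. -/
lemma ht_step {n : ℕ} (P : DyckPath n) (i : Fin (2 * n)) :
    P.ht ((i : ℤ) - n + 1) = P.ht ((i : ℤ) - n) + if P.step i = true then 1 else -1 := by
  have key (c : Bool) :
      (univ.filter fun k : Fin (2 * n) =>
        ((k : ℕ) : ℤ) < (i : ℤ) - n + 1 + n ∧ P.step k = c).card =
      (univ.filter fun k : Fin (2 * n) => ((k : ℕ) : ℤ) < (i : ℤ) - n + n ∧ P.step k = c).card +
        if P.step i = c then 1 else 0 := by
    split_ifs with h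
    · rw [← card_insert_of_notMem (a := i) (by simp)]
      congr 1
      ext k
      simp only [mem_filter_univ, mem_insert]
      constructor
      · rintro ⟨h₁, h₂⟩
        rcases eq_or_ne k i with e | e
        · exact Or.inl e
        · exact Or.inr ⟨by omega, h₂⟩
      · rintro (rfl | ⟨h₁, h₂⟩)
        · exact ⟨by omega, h⟩
        · exact ⟨by omega, h₂⟩
    · rw [add_zero]
      congr 1
      ext k
      simp only [mem_filter_univ]
      refine and_congr_left fun hk => ?_
      have : k ≠ i := by rintro rfl; exact h hk
      omega
  unfold ht
  rw [key true, key false]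
  cases P.step i <;> simp <;> ring

/-- Heights are constant outside the columns `-n, …, n`. -/
lemma ht_succ_of_out {n : ℕ} (P : DyckPath n) {x : ℤ} (hx : x < -n ∨ (n : ℤ) ≤ x) :
    P.ht (x + 1) = P.ht x := by
  have key (c : Bool) :
      (univ.filter fun k : Fin (2 * n) => ((k : ℕ) : ℤ) < x + 1 + n ∧ P.step k = c) =
      univ.filter fun k : Fin (2 * n) => ((k : ℕ) : ℤ) < x + n ∧ P.step k = c := by
    ext k
    simp only [mem_filter_univ]
    have := k.isLt
    refine and_congr_left fun _ => ?_
    omega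
  unfold ht
  rw [key true, key false]

end DyckPath

/-- The columns at which a step of the lower path goes down while the upper path goes up. -/
def DyckTiling.disCols {n : ℕ} (T : DyckTiling n) : Set ℤ :=
  {x | T.lower.ht (x + 1) < T.lower.ht x ∧ T.upper.ht x < T.upper.ht (x + 1)}

lemma DyckTiling.disCols_eq_image {n : ℕ} (T : DyckTiling n) :
    T.disCols = ((univ.filter fun i : Fin (2 * n) =>
      T.lower.step i = false ∧ T.upper.step i = true).image fun i : Fin (2 * n) => ((i : ℕ) : ℤ) - n :
        Finset ℤ) := by
  ext x
  simp only [disCols, Set.mem_ofPred_eq, coe_image, Set.mem_image, mem_coe, mem_filter_univ]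
  constructor
  · intro h
    have hx : ¬(x < -n ∨ (n : ℤ) ≤ x) := fun hx => by
      rw [T.lower.ht_succ_of_out hx] at h
      exact lt_irrefl _ h.1
    obtain ⟨k, hk⟩ : ∃ k : ℕ, (k : ℤ) = x + n := ⟨(x + n).toNat, by omega⟩
    obtain rfl : x = (k : ℤ) - n := by omega
    refine ⟨⟨k, by omega⟩, ?_, rfl⟩
    have h₁ := T.lower.ht_step ⟨k, by omega⟩
    have h₂ := T.upper.ht_step ⟨k, by omega⟩
    simp only at h₁ h₂
    rw [h₁, h₂] at h
    constructor
    · by_contra hc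
      rw [if_pos (by simpa using hc)] at h
      omega
    · by_contra hc
      rw [if_neg hc] at h
      omega
  · rintro ⟨i, ⟨h₁, h₂⟩, rfl⟩
    rw [T.lower.ht_step, T.upper.ht_step, h₁, h₂]
    simp

lemma DyckTiling.finite_disCols {n : ℕ} (T : DyckTiling n) : T.disCols.Finite := by
  rw [T.disCols_eq_image]
  exact finite_toSet _

lemma DyckTiling.ncard_disCols {n : ℕ} (T : DyckTiling n) : T.disCols.ncard = T.dis := by
  rw [T.disCols_eq_image, Set.ncard_coe_finset, card_image_of_injective, dis]
  intro i j h
  exact Fin.ext (by simp only at h; omega)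

section Spread

variable {s : ℤ} {t : Finset (ℤ × ℤ)}

lemma mem_spreadTile_of_le {q : ℤ × ℤ} (hq : q ∈ t) (h : q.1 ≤ s) :
    (q.1 - 1, q.2) ∈ spreadTile s t := by
  simp only [spreadTile, mem_union, mem_image, mem_filter]
  exact Or.inl (Or.inl ⟨q, ⟨hq, h⟩, rfl⟩)

lemma mem_spreadTile_of_ge {q : ℤ × ℤ} (hq : q ∈ t) (h : s ≤ q.1) :
    (q.1 + 1, q.2) ∈ spreadTile s t := by
  simp only [spreadTile, mem_union, mem_image, mem_filter]
  exact Or.inr ⟨q, ⟨hq, h⟩, rfl⟩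

lemma spreadTile_singleton_of_lt {c y : ℤ} (h : s < c) :
    spreadTile s {(c, y)} = {(c + 1, y)} := by
  simp [spreadTile, filter_singleton, h.not_ge, h.ne', h.le]

/-- A spread tile is never a single box at the spread column. -/
lemma spreadTile_ne_singleton_self (y : ℤ) : spreadTile s t ≠ {(s, y)} := by
  intro h
  have hmem : (s, y) ∈ spreadTile s t := by simp [h]
  have hs : ∃ q ∈ t, q.1 = s := by
    simp only [spreadTile, mem_union, mem_image, mem_filter, Prod.mk.injEq] at hmem
    rcases hmem with (⟨q, ⟨_, _⟩, _, _⟩ | ⟨q, ⟨hq, hqs⟩, _, _⟩) | ⟨q, ⟨_, _⟩, _, _⟩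
    · omega
    · exact ⟨q, hq, hqs⟩
    · omega
  obtain ⟨q, hq, hqs⟩ := hs
  have := mem_spreadTile_of_le hq hqs.le
  rw [h, mem_singleton, Prod.mk.injEq] at this
  omega

/-- Right of the spread column, one-box spread tiles come from one-box tiles. -/
lemma singleton_mem_spreadTiles_iff {ts : Finset (Finset (ℤ × ℤ))} {c y : ℤ} (h : s < c) :
    {(c + 1, y)} ∈ spreadTiles s ts ↔ {(c, y)} ∈ ts := by
  simp only [spreadTiles, mem_image]
  constructor
  · rintro ⟨t, ht, hst⟩
    have hsub : ∀ q ∈ t, q = (c, y) := by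
      intro q hq
      rcases le_or_gt q.1 s with hqs | hqs
      · have := mem_spreadTile_of_le hq hqs
        rw [hst, mem_singleton, Prod.mk.injEq] at this
        omega
      · have := mem_spreadTile_of_ge hq hqs.le
        rw [hst, mem_singleton, Prod.mk.injEq] at this
        exact Prod.ext (by simpa using this.1) this.2
    have hne : t.Nonempty := by
      rw [nonempty_iff_ne_empty]
      rintro rfl
      simp [spreadTile] at hst
    rwa [← eq_singleton_iff_nonempty_unique_mem.2 ⟨hne, hsub⟩]
  · exact fun ht => ⟨_, ht, spreadTile_singleton_of_lt h⟩

variable {n : ℕ} (P : DyckPath n)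

lemma spreadHt_of_lt {x : ℤ} (h : x < s) : spreadHt P s x = P.ht (x + 1) := if_pos h

lemma spreadHt_self : spreadHt P s s = P.ht s + 1 := by simp [spreadHt]

lemma spreadHt_of_gt {x : ℤ} (h : s < x) : spreadHt P s x = P.ht (x - 1) := by
  simp [spreadHt, h.not_gt, h.ne']

lemma eligibleCol_spread_succ_iff {ts : Finset (Finset (ℤ × ℤ))} {c : ℤ} (h : s < c) :
    EligibleCol (spreadHt P s) (spreadTiles s ts) (c + 1) ↔ EligibleCol P.ht ts c := by
  unfold EligibleCol
  rw [singleton_mem_spreadTiles_iff h, spreadHt_of_gt P (by omega : s < c + 1),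
    spreadHt_of_gt P (by omega : s < c + 1 - 1)]
  simp

lemma eligibleCol_spread_self (ts : Finset (Finset (ℤ × ℤ))) :
    EligibleCol (spreadHt P s) (spreadTiles s ts) s := by
  refine ⟨by rw [spreadHt_self, spreadHt_of_lt P (by omega)]; simp, ?_⟩
  simp only [spreadTiles, mem_image, not_exists, not_and]
  exact fun t _ => spreadTile_ne_singleton_self _

lemma not_eligibleCol_spread_add_one (ts : Finset (Finset (ℤ × ℤ))) :
    ¬EligibleCol (spreadHt P s) (spreadTiles s ts) (s + 1) := by
  rintro ⟨h, -⟩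
  rw [spreadHt_of_gt P (by omega), add_sub_cancel_right, spreadHt_self] at h
  omega

end Spread

section RibbonGrow

variable {n : ℕ} {T : DyckTiling n} {s : ℤ} {T' : DyckTiling (n + 1)}

/-- Ribbon-grow at column `s` makes `s` the special column. -/
lemma RibbonGrowRel.specialCol (h : RibbonGrowRel T s T') : SpecialCol T' s := by
  obtain ⟨-, Q, hQ, hmax, hup, htiles⟩ := h
  have hs := eligibleCol_spread_self (s := s) T.upper T.tiles
  refine ⟨⟨?_, ?_⟩, fun c hc => ?_⟩
  · rw [hup, hup, if_neg (by omega), if_neg (by omega)]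
    exact hs.1
  · rw [htiles, hup, if_neg (by omega), mem_union, not_or]
    refine ⟨hs.2, ?_⟩
    simp only [mem_image, mem_Ioo, not_exists, not_and]
    intro x hx he
    simp only [singleton_inj, Prod.mk.injEq] at he
    omega
  · by_contra! hsc
    obtain ⟨hc₁, hc₂⟩ := hc
    rw [htiles, mem_union, not_or] at hc₂
    rcases lt_trichotomy c Q with hcQ | rfl | hcQ
    · apply hc₂.2
      rw [hup, if_pos ⟨hsc, hcQ⟩]
      exact mem_image.2 ⟨c, mem_Ioo.2 ⟨hsc, hcQ⟩, by simp⟩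
    · rcases eq_or_ne c (s + 1) with rfl | hne
      · exact not_eligibleCol_spread_add_one _ _ hQ
      · rw [hup, hup, if_neg (by omega), if_pos (by omega)] at hc₁
        have := hQ.1
        omega
    · rw [hup c, if_neg (by omega)] at hc₁ hc₂
      rw [hup, if_neg (by omega)] at hc₁
      exact absurd (hmax c ⟨hc₁, hc₂.1⟩) (by omega)

lemma RibbonGrowRel.lower_up (h : RibbonGrowRel T s T') :
    T'.lower.ht (s - 1) < T'.lower.ht s := by
  rw [h.1, h.1, spreadHt_self, spreadHt_of_lt _ (by omega)]
  simp

/-- Ribbon-grow adds a ribbon exactly when some column right of `s` is eligible; in that case,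
provided the lower path goes up into the special column, `dis` increases by one. -/
lemma RibbonGrowRel.dis_eq (h : RibbonGrowRel T s T') :
    ((∀ c, EligibleCol T.upper.ht T.tiles c → c ≤ s) → T'.dis = T.dis) ∧
    ∀ c, SpecialCol T c → T.lower.ht (c - 1) < T.lower.ht c → s < c → T'.dis = T.dis + 1 := by
  obtain ⟨hlow, Q, hQ, hmax, hup, -⟩ := h
  have hsQ := hmax s (eligibleCol_spread_self _ _)
  have hQs : Q ≠ s + 1 := by
    rintro rfl
    exact not_eligibleCol_spread_add_one _ _ hQ
  let f : ℤ → ℤ := fun x => if x < s then x - 1 else x + 1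
  have hf : Function.Injective f := fun x y hxy => by
    simp only [f] at hxy
    split_ifs at hxy <;> omega
  have hsf : s ∉ f '' T.disCols := by
    rintro ⟨x, -, hx⟩
    simp only [f] at hx
    split_ifs at hx <;> omega
  have hQ₀ (hsQ : s < Q) : EligibleCol T.upper.ht T.tiles (Q - 1) := by
    rw [← eligibleCol_spread_succ_iff (s := s) _ (by omega)]
    simpa using hQ
  have hleft {x : ℤ} (hx : x < s) : x ∈ T'.disCols ↔ x ∈ f '' T.disCols := by
    have him : x ∈ f '' T.disCols ↔ x + 1 < s ∧ x + 1 ∈ T.disCols := by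
      constructor
      · rintro ⟨y, hy, rfl⟩
        simp only [f] at hx ⊢
        split_ifs at hx ⊢
        · simpa using ⟨by omega, hy⟩
        · omega
      · rintro ⟨h₁, h₂⟩
        exact ⟨x + 1, h₂, by simp [f, h₁]⟩
    rw [him, DyckTiling.disCols, DyckTiling.disCols, Set.mem_ofPred_eq, Set.mem_ofPred_eq, hlow,
      hlow, hup, hup, if_neg (by omega), if_neg (by omega)]
    rcases eq_or_ne (x + 1) s with rfl | hne
    · rw [spreadHt_self, spreadHt_of_lt _ hx]
      simp
    · have hlt : x + 1 < s := by omega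
      simp only [spreadHt_of_lt _ hx, spreadHt_of_lt _ hlt, hlt, true_and]
  have hright {x : ℤ} (hx : s < x) (hxQ : s < Q → x ≠ Q - 1) :
      x ∈ T'.disCols ↔ x ∈ f '' T.disCols := by
    have him : x ∈ f '' T.disCols ↔ x - 1 ∈ T.disCols := by
      constructor
      · rintro ⟨y, hy, rfl⟩
        simp only [f] at hx ⊢
        split_ifs at hx ⊢
        · omega
        · simpa using hy
      · exact fun h₂ => ⟨x - 1, h₂, by simp [f, show ¬x - 1 < s by omega]⟩
    rw [him, DyckTiling.disCols, DyckTiling.disCols, Set.mem_ofPred_eq, Set.mem_ofPred_eq, hlow,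
      hlow, hup, hup, spreadHt_of_gt _ hx, spreadHt_of_gt _ hx,
      spreadHt_of_gt _ (by omega : s < x + 1), spreadHt_of_gt _ (by omega : s < x + 1)]
    simp only [add_sub_cancel_right, sub_add_cancel]
    split_ifs <;> omega
  rw [← T.ncard_disCols, ← T'.ncard_disCols]
  constructor
  · intro hnone
    have hQeq : ¬s < Q := fun hlt => by
      have := hnone _ (hQ₀ hlt)
      omega
    rw [← Set.ncard_image_of_injective T.disCols hf]
    congr 1
    ext x
    rcases lt_trichotomy x s with hx | rfl | hx
    · exact hleft hx
    · refine iff_of_false (fun hx => ?_) hsf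
      have := hx.2
      rw [hup, hup, if_neg (by omega), if_neg (by omega), spreadHt_self,
        spreadHt_of_gt _ (by omega), add_sub_cancel_right] at this
      omega
    · exact hright hx (fun h => absurd h hQeq)
  · intro c hc hcl hsc
    have hcQ : Q = c + 1 := by
      have h₁ := hmax _ ((eligibleCol_spread_succ_iff _ hsc).2 hc.1)
      have h₂ := hc.2 _ (hQ₀ (by omega))
      omega
    rw [← Set.ncard_image_of_injective T.disCols hf,
      ← Set.ncard_insert_of_notMem hsf (T.finite_disCols.image f)]
    congr 1
    ext x
    rw [Set.mem_insert_iff]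
    rcases lt_trichotomy x s with hx | rfl | hx
    · rw [hleft hx]
      simp [hx.ne]
    · refine iff_of_true ⟨?_, ?_⟩ (Or.inl rfl)
      · rw [hlow, hlow, spreadHt_self, spreadHt_of_gt _ (by omega)]
        simp
      · rw [hup, hup, if_neg (by omega), if_pos (by omega), spreadHt_self,
          spreadHt_of_gt _ (by omega)]
        simp
    · rcases eq_or_ne x c with rfl | hne
      · have hx₁ : x ∉ T'.disCols := fun hmem => by
          have := hmem.1
          rw [hlow, hlow, spreadHt_of_gt _ hx, spreadHt_of_gt _ (by omega)] at this
          simp at this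
          omega
        have hx₂ : x ∉ f '' T.disCols := by
          rintro ⟨y, hy, hyx⟩
          simp only [f] at hyx
          split_ifs at hyx
          · omega
          · obtain rfl : y = x - 1 := by omega
            have := hy.1
            simp at this
            omega
        exact iff_of_false hx₁ (by simp [hx₂, hx.ne'])
      · rw [hright hx (by omega)]
        simp [hx.ne']

end RibbonGrow

/-- The positions (in `ℕ`) at which a word fails to increase. -/
def weakDescents {n : ℕ} (p : Fin n → ℕ) : Set ℕ :=
  {k | ∃ h : k + 1 < n, p ⟨k + 1, h⟩ ≤ p ⟨k, by omega⟩}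

lemma finite_weakDescents {n : ℕ} (p : Fin n → ℕ) : (weakDescents p).Finite :=
  (Set.finite_lt_nat n).subset fun k ⟨h, _⟩ => show k < n by omega

/-- The special column, the lower step into it, and `dis` of a ribbon-grown tiling. -/
lemma IsDTR.dis_eq {n : ℕ} {p : Fin n → ℕ} {T : DyckTiling n} (h : IsDTR n p T) :
    (∀ i : Fin n, (i : ℕ) + 1 = n → SpecialCol T ((p i : ℤ) - i) ∧
      T.lower.ht ((p i : ℤ) - i - 1) < T.lower.ht ((p i : ℤ) - i)) ∧
    T.dis = (weakDescents p).ncard := by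
  induction h with
  | nil p T =>
    refine ⟨fun i => i.elim0, ?_⟩
    have : weakDescents p = ∅ := by
      ext k
      simp [weakDescents]
    simp [this, DyckTiling.dis]
  | cons n p T T' hT hg ih =>
    refine ⟨fun i hi => ?_, ?_⟩
    · obtain rfl : i = Fin.last n := Fin.ext (by simpa using hi)
      simpa using ⟨hg.specialCol, hg.lower_up⟩
    · obtain ⟨ih₁, ih₂⟩ := ih
      have hstep {k : ℕ} (hk : k + 1 ≠ n) :
          k ∈ weakDescents p ↔ k ∈ weakDescents fun i : Fin n => p i.castSucc := by
        constructor
        · rintro ⟨h, hp⟩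
          exact ⟨by omega, hp⟩
        · rintro ⟨h, hp⟩
          exact ⟨by omega, hp⟩
      rcases n with _ | m
      · have hnone : ∀ c, EligibleCol T.upper.ht T.tiles c →
            c ≤ (p (Fin.last 0) : ℤ) - (0 : ℕ) := by
          rintro c ⟨hc, -⟩
          simp [DyckPath.ht] at hc
        rw [hg.dis_eq.1 hnone, ih₂]
        congr 1
        ext k
        exact (hstep (by omega)).symm
      · obtain ⟨hsp, hlow⟩ := ih₁ (Fin.last m) (by simp)
        simp only [Fin.val_last] at hsp hlow
        have hnot : m ∉ weakDescents fun i : Fin (m + 1) => p i.castSucc := by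
          rintro ⟨h, -⟩
          omega
        have hm : m ∈ weakDescents p ↔ p (Fin.last (m + 1)) ≤ p (Fin.last m).castSucc :=
          ⟨fun ⟨_, h⟩ => h, fun h => ⟨by omega, h⟩⟩
        by_cases hdes : p (Fin.last (m + 1)) ≤ p (Fin.last m).castSucc
        · rw [hg.dis_eq.2 _ hsp hlow (by push_cast; omega), ih₂,
            ← Set.ncard_insert_of_notMem hnot (finite_weakDescents _)]
          congr 1
          ext k
          rw [Set.mem_insert_iff]
          rcases eq_or_ne k m with rfl | hk
          · simp [hm, hdes]
          · rw [hstep (by omega)]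
            simp [hk]
        · rw [hg.dis_eq.1 fun c hc => (hsp.2 c hc).trans (by push_cast; omega), ih₂]
          congr 1
          ext k
          rcases eq_or_ne k m with rfl | hk
          · exact iff_of_false hnot (mt hm.1 hdes)
          · exact (hstep (by omega)).symm

/-- If `(λ, σ)` is the labeled tree arising from `(p_1, …, p_n)`
(i.e. `p = seqOf C` for a natural chord labeling `C` of `λ` whose standardized
left-endpoint word is `σ`), then `DES(σ) = DES(min-word(match(p)))`; in particular
`dis(DTR(p)) = des(min-word(match(p)))`. -/
theorem descents_eq_minword_descents (n : ℕ) (lam : DyckPath n) (C : ChordLabeling lam)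
    (σ : Equiv.Perm (Fin n)) (hσ : IsStandardization C.l σ)
    (w : Fin n → ℕ) (hw : IsMinWord n (matchSeq n (seqOf C)) w) :
    descentFinset (permWord σ) = descentFinset w ∧
    ∀ T : DyckTiling n, IsDTR n (seqOf C) T → T.dis = (descentFinset w).card := by
  have hdes (i j : Fin n) (hij : (j : ℕ) = i + 1) : w j < w i ↔ seqOf C j ≤ seqOf C i :=
    hw.lt_iff (seqOf_le C) hij
  constructor
  · ext i
    rw [descentFinset, descentFinset, mem_filter_univ, mem_filter_univ]
    refine and_congr_right fun hi => ?_
    have hij : ((nextIdx i : Fin n) : ℕ) = i + 1 := by rw [nextIdx_eq i hi]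
    rw [hdes _ _ hij, seqOf_succ_le_iff C hij, ← hσ, Fin.lt_def, permWord, permWord]
  · intro T hT
    rw [hT.dis_eq.2, ← card_image_of_injective (descentFinset w) Fin.val_injective,
      ← Set.ncard_coe_finset]
    congr 1
    ext k
    simp only [weakDescents, descentFinset, Set.mem_ofPred_eq, coe_image, Set.mem_image, mem_coe,
      mem_filter_univ]
    constructor
    · rintro ⟨h, hp⟩
      refine ⟨⟨k, by omega⟩, ⟨h, ?_⟩, rfl⟩
      rw [nextIdx_eq _ h]
      exact (hdes _ _ rfl).2 hp
    · rintro ⟨i, ⟨h, hp⟩, rfl⟩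
      rw [nextIdx_eq _ h] at hp
      exact ⟨h, (hdes _ _ rfl).1 hp⟩

end
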